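/- arXiv:1905.03177 — 6 statements merged into one kernel-verified Lean document; each statement's English description precedes it below -/
import Mathlib

section
/- Let S ⊆ ℝ^d × {−1,+1} be a finite training set with X₊ and X₋ nonempty, and let S' ⊆ ℝ^d × {−1,+1} be any artificial data set. If |S'| < d+1, then the worst-case margin satisfies α(S,S') ≤ 0; that is, either S ∪ S' is not linearly separable, or there exists a linear separator of S ∪ S' whose margin on S is at most 0. -/
open scoped RealInnerProductSpace ENNReal Classical
open Metric Set MeasureTheory

noncomputable section

/-- `ℝ^d` with the Euclidean (ℓ²) structure. -/
abbrev Euc (d : ℕ) := EuclideanSpace ℝ (Fin d)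

/-- `X₊`: the set of points of `T` with label `1`. -/
def posPts {d : ℕ} (T : Set (Euc d × ℝ)) : Set (Euc d) := {x | (x, (1 : ℝ)) ∈ T}

/-- `X₋`: the set of points of `T` with label `-1`. -/
def negPts {d : ℕ} (T : Set (Euc d × ℝ)) : Set (Euc d) := {x | (x, (-1 : ℝ)) ∈ T}

/-- All labels in `T` are `±1`, i.e. `T ⊆ ℝ^d × {-1, +1}`. -/
def LabelsPM {d : ℕ} (T : Set (Euc d × ℝ)) : Prop := ∀ p ∈ T, p.2 = 1 ∨ p.2 = -1

/-- `(w, b)` is a linear separator of the labeled set `T`: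
`w ≠ 0` and `y(⟨w,x⟩ + b) ≥ 0` for all `(x,y) ∈ T`. -/
def IsLinSep {d : ℕ} (w : Euc d) (b : ℝ) (T : Set (Euc d × ℝ)) : Prop :=
  w ≠ 0 ∧ ∀ p ∈ T, p.2 * (⟪w, p.1⟫ + b) ≥ 0

/-- The hyperplane `H = {x | ⟨w,x⟩ + b = 0}` associated with `(w, b)`. -/
def hyperplane {d : ℕ} (w : Euc d) (b : ℝ) : Set (Euc d) := {x | ⟪w, x⟫ + b = 0}

/-- The margin `γ_{(w,b)}(S)`: infimum over `(x,y) ∈ S` of the distance from `x`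
to the hyperplane of `(w,b)`. -/
def linMargin {d : ℕ} (S : Set (Euc d × ℝ)) (w : Euc d) (b : ℝ) : ℝ :=
  ⨅ p : S, Metric.infDist (p : Euc d × ℝ).1 (hyperplane w b)

/-- `γ` is the max-margin of `S`: attained by some linear separator of `S`, and an upper
bound on the margin of every linear separator of `S`. -/
def IsMaxMargin {d : ℕ} (S : Set (Euc d × ℝ)) (γ : ℝ) : Prop :=
  (∃ w b, IsLinSep w b S ∧ linMargin S w b = γ) ∧
    ∀ w b, IsLinSep w b S → linMargin S w b ≤ γ

/-- The worst-case margin `α(S,S')` (an extended real): the infimum over all linear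
separators of `S ∪ S'` of their margin on `S`, or `-∞` if no separator exists. -/
def alpha {d : ℕ} (S S' : Set (Euc d × ℝ)) : EReal :=
  if ∃ w b, IsLinSep w b (S ∪ S') then
    sInf {m : EReal | ∃ w b, IsLinSep w b (S ∪ S') ∧ m = ((linMargin S w b : ℝ) : EReal)}
  else ⊥

/-- `S_r`: the set of labeled points obtained by moving a point of `S` by distance at
most `r`, keeping its label; i.e. `((X₊)_r × {1}) ∪ ((X₋)_r × {-1})`. -/
def ballAug {d : ℕ} (S : Set (Euc d × ℝ)) (r : ℝ) : Set (Euc d × ℝ) :=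
  {p | (p.2 = 1 ∧ Metric.infDist p.1 (posPts S) ≤ r) ∨
       (p.2 = -1 ∧ Metric.infDist p.1 (negPts S) ≤ r)}

/-- A `{±1}`-valued classifier. -/
def IsClassifier {d : ℕ} (f : Euc d → ℝ) : Prop := ∀ x, f x = 1 ∨ f x = -1

/-- `f` separates the labeled set `T`: `f x = y` for all `(x,y) ∈ T`. -/
def Separates {d : ℕ} (f : Euc d → ℝ) (T : Set (Euc d × ℝ)) : Prop :=
  ∀ p ∈ T, f p.1 = p.2

/-- The circumradius of `A`: the radius of the smallest closed ball containing `A`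
(as an extended nonnegative real). -/
def circumradius {d : ℕ} (A : Set (Euc d)) : ℝ≥0∞ :=
  ⨅ c : Euc d, ⨆ x ∈ A, edist c x

/-- `f` is `ε`-respectful of `T`: `f = 1` on the convex hull of any subset of `X₊(T)` of
circumradius at most `ε`, and `f = -1` on the convex hull of any subset of `X₋(T)` of
circumradius at most `ε`. (Taking `ε = ⊤` gives respectful classifiers.) -/
def RespectfulOf {d : ℕ} (ε : ℝ≥0∞) (f : Euc d → ℝ) (T : Set (Euc d × ℝ)) : Prop :=
  (∀ A ⊆ posPts T, circumradius A ≤ ε → ∀ x ∈ convexHull ℝ A, f x = 1) ∧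
  (∀ B ⊆ negPts T, circumradius B ≤ ε → ∀ x ∈ convexHull ℝ B, f x = -1)

/-- `R_ε(T)`, the set of `ε`-respectful classifiers of `T`. -/
def respectfulSet {d : ℕ} (ε : ℝ≥0∞) (T : Set (Euc d × ℝ)) : Set (Euc d → ℝ) :=
  {f | IsClassifier f ∧ RespectfulOf ε f T}

/-- The margin `γ_f(S)` of a classifier `f` on `S`:
`min_{(x,y) ∈ S} d(x, f⁻¹(-y))`. -/
def clsMargin {d : ℕ} (f : Euc d → ℝ) (S : Set (Euc d × ℝ)) : ℝ :=
  ⨅ p : S, Metric.infDist (p : Euc d × ℝ).1 (f ⁻¹' {-(p : Euc d × ℝ).2})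

/-- `γ_f(S,S')`: the margin of `f` on `S` if `f` separates `S ∪ S'`, and `-∞` otherwise. -/
def clsMarginAug {d : ℕ} (f : Euc d → ℝ) (S S' : Set (Euc d × ℝ)) : EReal :=
  if Separates f (S ∪ S') then ((clsMargin f S : ℝ) : EReal) else ⊥

/-- The distance `d(P, Q) = inf {d(a,b) | a ∈ P, b ∈ Q}` between two sets,
as an extended nonnegative real. -/
def setSepDist {d : ℕ} (P Q : Set (Euc d)) : ℝ≥0∞ :=
  ⨅ a ∈ P, EMetric.infEdist a Q

/-- The uniform (rotation-invariant) probability measure on the sphere of radius `r`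
centered at the origin in `ℝ^d`, obtained by normalizing the surface measure induced by
Lebesgue measure on the unit sphere and pushing forward by scaling by `r`. -/
def uniformSphere (d : ℕ) (r : ℝ) : Measure (Euc d) :=
  (((volume : Measure (Euc d)).toSphere) Set.univ)⁻¹ •
    ((((volume : Measure (Euc d)).toSphere).map (Subtype.val)).map (fun x => r • x))

end

theorem aux_ker {V ι : Type*} [AddCommGroup V] [Module ℝ V] [FiniteDimensional ℝ V]
    (t : Finset ι) (L : ι → V →ₗ[ℝ] ℝ) (h : t.card < Module.finrank ℝ V) :
    ∃ v : V, v ≠ 0 ∧ ∀ i ∈ t, L i v = 0 := by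
  have h1 : LinearMap.ker (LinearMap.pi (fun i : t => L i)) ≠ ⊥ := by
    apply LinearMap.ker_ne_bot_of_finrank_lt
    simpa using h
  obtain ⟨v, hv, hv0⟩ := Submodule.exists_mem_ne_zero_of_ne_bot h1
  refine ⟨v, hv0, fun i hi => ?_⟩
  have := congrFun (LinearMap.mem_ker.1 hv) ⟨i, hi⟩
  simpa using this

theorem aux_dir {V ι : Type*} [AddCommGroup V] [Module ℝ V] [FiniteDimensional ℝ V]
    (a : ι) (t : Finset ι) (L : ι → V →ₗ[ℝ] ℝ) (h : t.card < Module.finrank ℝ V)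
    (h2 : 2 ≤ Module.finrank ℝ V) :
    ∃ u : V, u ≠ 0 ∧ L a u = 0 ∧ ∀ i ∈ t, 0 ≤ L i u := by
  classical
  rcases t.eq_empty_or_nonempty with rfl | ⟨b, hb⟩
  · obtain ⟨v, hv, hv'⟩ := aux_ker {a} L (by rw [Finset.card_singleton]; omega)
    exact ⟨v, hv, hv' a (by simp), by simp⟩
  · obtain ⟨v, hv, hv'⟩ := aux_ker (insert a (t.erase b)) L (by
      have h3 := Finset.card_insert_le a (t.erase b)
      have h4 := Finset.card_erase_add_one hb
      omega)
    have ha : L a v = 0 := hv' a (by simp)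
    have ht : ∀ i ∈ t, i ≠ b → L i v = 0 := fun i hi hib => hv' i (by simp [hi, hib])
    rcases le_total 0 (L b v) with hs | hs
    · refine ⟨v, hv, ha, fun i hi => ?_⟩
      by_cases hib : i = b
      · rw [hib]; exact hs
      · rw [ht i hi hib]
    · refine ⟨-v, by simpa using hv, by simp [ha], fun i hi => ?_⟩
      by_cases hib : i = b
      · rw [hib]; simpa using hs
      · simp [ht i hi hib]

theorem aux_core {V ι : Type*} [AddCommGroup V] [Module ℝ V] [FiniteDimensional ℝ V]
    (s t : Finset ι) (hs : s.Nonempty) (L : ι → V →ₗ[ℝ] ℝ)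
    (h : t.card < Module.finrank ℝ V) (h2 : 2 ≤ Module.finrank ℝ V)
    (v0 : V) (hv0 : ∀ i ∈ s, 0 < L i v0) (hv1 : ∀ i ∈ t, 0 ≤ L i v0) :
    ∃ v : V, v ≠ 0 ∧ (∀ i ∈ s, 0 ≤ L i v) ∧ (∀ i ∈ t, 0 ≤ L i v) ∧ ∃ i ∈ s, L i v = 0 := by
  obtain ⟨a, ha⟩ := hs
  obtain ⟨u, hu, hua, hut⟩ := aux_dir a t L h h2
  obtain ⟨m, hm, hmax⟩ := s.exists_max_image (fun i => -(L i u) / L i v0) ⟨a, ha⟩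
  set c : ℝ := -(L m u) / L m v0 with hc
  have hc0 : 0 ≤ c := by
    have := hmax a ha
    simpa [hua] using this
  refine ⟨u + c • v0, ?_, ?_, ?_, m, hm, ?_⟩
  · intro h0
    have h1 : L a (u + c • v0) = 0 := by rw [h0]; simp
    simp only [map_add, map_smul, hua, smul_eq_mul, zero_add] at h1
    have h3 : c = 0 := by
      rcases mul_eq_zero.1 h1 with h4 | h4
      · exact h4
      · exact absurd h4 (hv0 a ha).ne'
    rw [h3] at h0
    exact hu (by simpa using h0)
  · intro i hi
    have := (div_le_iff₀ (hv0 i hi)).1 (hmax i hi)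
    simp only [map_add, map_smul, smul_eq_mul]
    linarith
  · intro i hi
    have := mul_nonneg hc0 (hv1 i hi)
    have := hut i hi
    simp only [map_add, map_smul, smul_eq_mul]
    linarith
  · have := (hv0 m hm).ne'
    simp only [map_add, map_smul, smul_eq_mul, hc]
    field_simp
    ring

noncomputable def auxL {d : ℕ} (p : Euc d × ℝ) : (Euc d × ℝ) →ₗ[ℝ] ℝ :=
  p.2 • ((innerₗ (Euc d) p.1).comp (LinearMap.fst ℝ (Euc d) ℝ) + LinearMap.snd ℝ (Euc d) ℝ)

theorem auxL_apply {d : ℕ} (p q : Euc d × ℝ) :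
    auxL p q = p.2 * (⟪q.1, p.1⟫ + q.2) := by
  simp [auxL, real_inner_comm, mul_add]

theorem aux_tight {d : ℕ} (S : Set (Euc d × ℝ)) (hSlab : LabelsPM S) (w : Euc d) (b : ℝ)
    (p : Euc d × ℝ) (hp : p ∈ S) (h : p.2 * (⟪w, p.1⟫ + b) = 0) : linMargin S w b ≤ 0 := by
  have hp2 : p.2 ≠ 0 := by rcases hSlab p hp with h | h <;> rw [h] <;> norm_num
  have hmem : p.1 ∈ hyperplane w b := (mul_eq_zero.1 h).resolve_left hp2
  have : linMargin S w b ≤ Metric.infDist p.1 (hyperplane w b) :=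
    ciInf_le (f := fun p : S => Metric.infDist (p : Euc d × ℝ).1 (hyperplane w b))
      ⟨0, by rintro _ ⟨q, rfl⟩; exact Metric.infDist_nonneg⟩ ⟨p, hp⟩
  rwa [Metric.infDist_zero_of_mem hmem] at this

/-- Theorem 1 of the paper: if the artificial data set `S'` has fewer
than `d+1` points, then the worst-case margin satisfies `α(S,S') ≤ 0`. -/
theorem augmentation_size_lower_bound {d : ℕ} (S S' : Set (Euc d × ℝ))
    (hSfin : S.Finite) (hSlab : LabelsPM S)
    (hpos : (posPts S).Nonempty) (hneg : (negPts S).Nonempty)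
    (hS'lab : LabelsPM S') (hS'fin : S'.Finite) (hcard : S'.ncard < d + 1) :
    alpha S S' ≤ 0 := by
  unfold alpha
  split_ifs with hex
  swap
  · exact bot_le
  suffices hmain : ∃ w b, IsLinSep w b (S ∪ S') ∧ linMargin S w b ≤ 0 by
    obtain ⟨w, b, h, hle⟩ := hmain
    refine le_trans (b := ((linMargin S w b : ℝ) : EReal)) (sInf_le ⟨w, b, h, rfl⟩) ?_
    exact_mod_cast hle
  obtain ⟨w, b, hw, hsep⟩ := hex
  by_cases htight : ∃ p ∈ S, p.2 * (⟪w, p.1⟫ + b) = 0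
  · obtain ⟨p, hp, h0⟩ := htight
    exact ⟨w, b, ⟨hw, hsep⟩, aux_tight S hSlab w b p hp h0⟩
  push Not at htight
  have hd : 1 ≤ d := by
    rcases Nat.eq_zero_or_pos d with rfl | h
    · exact absurd (Subsingleton.elim w 0) hw
    · exact h
  have hfr : Module.finrank ℝ (Euc d × ℝ) = d + 1 := by simp
  obtain ⟨x, hx⟩ := hpos
  obtain ⟨y, hy⟩ := hneg
  have hx' : (x, (1 : ℝ)) ∈ S := hx
  have hy' : (y, (-1 : ℝ)) ∈ S := hy
  obtain ⟨v, hv, hvS, hvS', p, hp, hp0⟩ := aux_core hSfin.toFinset hS'fin.toFinset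
    ⟨_, hSfin.mem_toFinset.2 hx'⟩ auxL
    (by rw [hfr, ← Set.ncard_eq_toFinset_card S' hS'fin]; exact hcard) (by omega) (w, b)
    (fun p hp => by
      have hp := hSfin.mem_toFinset.1 hp
      rw [auxL_apply]
      exact lt_of_le_of_ne (hsep p (Or.inl hp)) (htight p hp).symm)
    (fun p hp => by
      rw [auxL_apply]
      exact hsep p (Or.inr (hS'fin.mem_toFinset.1 hp)))
  simp only [auxL_apply, Set.Finite.mem_toFinset] at hvS hvS' hp hp0
  refine ⟨v.1, v.2, ⟨?_, ?_⟩, aux_tight S hSlab v.1 v.2 p hp hp0⟩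
  · intro h1
    have e1 := hvS _ hx'
    have e2 := hvS _ hy'
    simp only [h1, inner_zero_left] at e1 e2
    exact hv (Prod.ext h1 (by simp only [Prod.snd_zero]; linarith))
  · rintro q (hq | hq)
    · exact hvS q hq
    · exact hvS' q hq
end

section
/- Let S ⊆ ℝ^d × {−1,+1} be a finite, linearly separable training set with max-margin γ*. Then there exists an artificial data set S' ⊆ ℝ^d × {−1,+1} with |S'| = d+1 such that α(S,S') = γ*; i.e., S ∪ S' is linearly separable and every linear separator of S ∪ S' has margin exactly γ* on S. -/
open scoped RealInnerProductSpace ENNReal Classical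
open Metric Set MeasureTheory

/-- Theorem 3 of the paper: there is an artificial set `S'` of exactly
`d+1` points such that `α(S,S') = γ*`: the augmented set is linearly separable and every
linear separator of it has margin exactly `γ*` on `S`. -/
theorem exists_augmentation_achieving_max_margin {d : ℕ} (S : Set (Euc d × ℝ))
    (hSfin : S.Finite) (hSlab : LabelsPM S)
    (hpos : (posPts S).Nonempty) (hneg : (negPts S).Nonempty)
    (γstar : ℝ) (hmax : IsMaxMargin S γstar) :
    ∃ S' : Set (Euc d × ℝ), LabelsPM S' ∧ S'.Finite ∧ S'.ncard = d + 1 ∧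
      (∃ w b, IsLinSep w b (S ∪ S')) ∧
      (∀ w b, IsLinSep w b (S ∪ S') → linMargin S w b = γstar) ∧
      alpha S S' = (γstar : EReal) := by
  classical
  obtain ⟨⟨w0, b0, ⟨hw0, hsep0⟩, hm0⟩, -⟩ := hmax
  obtain ⟨n, rfl⟩ : ∃ n, d = n + 1 := by
    cases d with
    | zero => exact absurd (Subsingleton.elim w0 0) hw0
    | succ n => exact ⟨n, rfl⟩
  have hww : ⟪w0, w0⟫ ≠ 0 := by simpa using hw0
  obtain ⟨h0, hh0⟩ : ∃ h0 : Euc (n + 1), ⟪w0, h0⟫ + b0 = 0 := by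
    refine ⟨(-b0 / ⟪w0, w0⟫) • w0, ?_⟩
    rw [inner_smul_right]
    field_simp
    ring
  let K : Submodule ℝ (Euc (n + 1)) := (Submodule.span ℝ {w0})ᗮ
  have hK : Module.finrank ℝ K = n := by
    haveI : Fact (Module.finrank ℝ (Euc (n + 1)) = n + 1) := ⟨by simp⟩
    exact Submodule.finrank_orthogonal_span_singleton hw0
  let v := Module.finBasisOfFinrankEq ℝ K hK
  have hv : ∀ i, ⟪w0, (v i : Euc (n + 1))⟫ = 0 := fun i =>
    Submodule.mem_orthogonal_singleton_iff_inner_right.1 (v i).2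
  let u : Fin (n + 1) → Euc (n + 1) := Fin.cons 0 (fun i => (v i : Euc (n + 1)))
  have hu0 : ∀ i, ⟪w0, u i⟫ = 0 := by
    intro i
    refine Fin.cases ?_ (fun j => ?_) i
    · simp [u]
    · simpa [u] using hv j
  have huinj : Function.Injective u := by
    refine Fin.cons_injective_iff.2 ⟨?_, ?_⟩
    · rintro ⟨i, hi⟩
      exact v.ne_zero i (Subtype.ext hi)
    · exact Subtype.val_injective.comp v.injective
  let c : Euc (n + 1) := h0 + ((n + 1 : ℝ)⁻¹) • ∑ i, u i
  let P : Set (Euc (n + 1) × ℝ) := Set.range (fun i => (h0 + u i, (1 : ℝ)))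
  have hPinj : Function.Injective (fun i => (h0 + u i, (1 : ℝ))) := by
    intro i j hij
    exact huinj (add_left_cancel (Prod.ext_iff.1 hij).1)
  have hPfin : P.Finite := Set.finite_range _
  have hcP : (c, (-1 : ℝ)) ∉ P := by
    rintro ⟨i, hi⟩
    have := (Prod.ext_iff.1 hi).2
    norm_num at this
  have hex : IsLinSep w0 b0 (S ∪ insert (c, (-1 : ℝ)) P) := by
    refine ⟨hw0, ?_⟩
    rintro p (hp | rfl | ⟨i, rfl⟩)
    · exact hsep0 p hp
    · have : ⟪w0, c⟫ + b0 = 0 := by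
        simp only [c, inner_add_right, inner_smul_right, inner_sum, hu0]
        simpa using hh0
      simp [this]
    · have : ⟪w0, h0 + u i⟫ + b0 = 0 := by
        rw [inner_add_right, hu0]
        simpa using hh0
      simp [this]
  have hall : ∀ w b, IsLinSep w b (S ∪ insert (c, (-1 : ℝ)) P) → linMargin S w b = γstar := by
    rintro w b ⟨hw, hs⟩
    have h1 : ∀ i, 0 ≤ ⟪w, h0⟫ + b + ⟪w, u i⟫ := by
      intro i
      have := hs (h0 + u i, 1) (Or.inr (Or.inr ⟨i, rfl⟩))
      simp only [inner_add_right] at this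
      linarith
    have h2 : ⟪w, h0⟫ + b + (n + 1 : ℝ)⁻¹ * ∑ i, ⟪w, u i⟫ ≤ 0 := by
      have := hs (c, -1) (Or.inr (Or.inl rfl))
      simp only [c, inner_add_right, inner_smul_right, inner_sum] at this
      linarith
    have hn : (0 : ℝ) < n + 1 := by positivity
    have h3 : ∑ i, (⟪w, h0⟫ + b + ⟪w, u i⟫) ≤ 0 := by
      rw [Finset.sum_add_distrib]
      simp only [Finset.sum_const, Finset.card_univ, Fintype.card_fin, nsmul_eq_mul]
      have := mul_le_mul_of_nonneg_left h2 hn.le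
      rw [mul_add, ← mul_assoc, mul_inv_cancel₀ hn.ne'] at this
      push_cast
      linarith
    have h4 : ∀ i, ⟪w, h0⟫ + b + ⟪w, u i⟫ = 0 := by
      have h5 := (Finset.sum_eq_zero_iff_of_nonneg (fun i _ => h1 i)).1
        (le_antisymm h3 (Finset.sum_nonneg (fun i _ => h1 i)))
      exact fun i => h5 i (Finset.mem_univ i)
    have h6 : ⟪w, h0⟫ + b = 0 := by simpa [u] using h4 0
    have h7 : ∀ j, ⟪w, (v j : Euc (n + 1))⟫ = 0 := by
      intro j
      have := h4 j.succ
      simp only [u, Fin.cons_succ] at this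
      linarith
    have h8 : w ∈ Submodule.span ℝ {w0} := by
      rw [← Submodule.orthogonal_orthogonal (Submodule.span ℝ {w0}),
        Submodule.mem_orthogonal']
      intro x hx
      have hx' : ∑ i, (v.repr ⟨x, hx⟩) i • (v i : Euc (n + 1)) = x := by
        have := congrArg K.subtype (v.sum_repr ⟨x, hx⟩)
        simpa only [map_sum, map_smul, Submodule.subtype_apply] using this
      rw [← hx', inner_sum]
      exact Finset.sum_eq_zero (fun i _ => by rw [inner_smul_right, h7, mul_zero])
    obtain ⟨t, rfl⟩ := Submodule.mem_span_singleton.1 h8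
    have ht : t ≠ 0 := by
      rintro rfl
      simp at hw
    have hyp : hyperplane (t • w0) b = hyperplane w0 b0 := by
      ext x
      simp only [hyperplane, Set.mem_setOf_eq]
      rw [real_inner_smul_left] at h6 ⊢
      have : t * ⟪w0, x⟫ + b = t * (⟪w0, x⟫ + b0) := by
        linear_combination h6 - t * hh0
      rw [this]
      simp [ht]
    rw [← hm0]
    simp only [linMargin, hyp]
  refine ⟨insert (c, (-1 : ℝ)) P, ?_, hPfin.insert _, ?_, ⟨w0, b0, hex⟩, hall, ?_⟩
  · rintro p (rfl | ⟨i, rfl⟩)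
    · exact Or.inr rfl
    · exact Or.inl rfl
  · rw [Set.ncard_insert_of_notMem hcP hPfin]
    simp only [P]
    rw [← Set.image_univ, Set.ncard_image_of_injective _ hPinj]
    simp
  · unfold alpha
    rw [if_pos ⟨w0, b0, hex⟩]
    have : {m : EReal | ∃ w b, IsLinSep w b (S ∪ insert (c, (-1 : ℝ)) P) ∧
        m = ((linMargin S w b : ℝ) : EReal)} = {(γstar : EReal)} := by
      ext m
      constructor
      · rintro ⟨w, b, h, rfl⟩
        rw [hall w b h]
        rfl
      · rintro rfl
        exact ⟨w0, b0, hex, by rw [hm0]⟩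
    rw [this, sInf_singleton]
end

section
/- Fix natural numbers n, m ≥ 1, a radius r > 0, and dimension d ≥ 2. There exists a training set S ⊆ ℝ^d × {−1,+1} with |X₊| = n and |X₋| = m such that for every artificial set S' ⊆ S_r with |X₊'| < n (where X₊' = {x : (x,1) ∈ S'}), the worst-case margin satisfies α(S,S') = 0. -/
open scoped RealInnerProductSpace ENNReal Classical
open Metric Set MeasureTheory

lemma aux_basis {d : ℕ} (hd : 2 ≤ d) : ∃ e f : Euc d, ‖e‖ = 1 ∧ ‖f‖ = 1 ∧ ⟪e, f⟫ = 0 := by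
  refine ⟨EuclideanSpace.single ⟨0, by omega⟩ 1, EuclideanSpace.single ⟨1, by omega⟩ 1, ?_, ?_, ?_⟩
  · simp
  · simp
  · simp [EuclideanSpace.inner_single_left]

lemma aux_near {d : ℕ} (X : ℕ → Euc d) (n : ℕ) (hn : 1 ≤ n) (p : Euc d) (r : ℝ)
    (h : Metric.infDist p (X '' Set.Iio n) ≤ r) : ∃ i < n, dist p (X i) ≤ r := by
  have hf : (X '' Set.Iio n).Finite := (Set.finite_Iio n).image X
  have hne : (X '' Set.Iio n).Nonempty := ⟨X 0, 0, by simpa using (by omega : 0 < n), rfl⟩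
  obtain ⟨y, ⟨i, hi, rfl⟩, hy⟩ := hf.isCompact.exists_infDist_eq_dist hne p
  exact ⟨i, hi, by rw [← hy]; exact h⟩

lemma aux_alpha {d : ℕ} (S S' : Set (Euc d × ℝ)) (w : Euc d) (b : ℝ)
    (h : IsLinSep w b (S ∪ S')) (p : Euc d × ℝ) (hp : p ∈ S) (hz : ⟪w, p.1⟫ + b = 0) :
    alpha S S' = 0 := by
  have hnn : ∀ w b, 0 ≤ linMargin S w b := fun w b =>
    Real.iInf_nonneg fun p => Metric.infDist_nonneg
  have h0 : linMargin S w b = 0 := by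
    apply le_antisymm _ (hnn w b)
    have : linMargin S w b ≤ Metric.infDist p.1 (hyperplane w b) :=
      ciInf_le (f := fun p : S => Metric.infDist (p : Euc d × ℝ).1 (hyperplane w b))
        ⟨0, by rintro _ ⟨q, rfl⟩; exact Metric.infDist_nonneg⟩ ⟨p, hp⟩
    rwa [Metric.infDist_zero_of_mem (show p.1 ∈ hyperplane w b from hz)] at this
  unfold alpha
  rw [if_pos ⟨w, b, h⟩]
  apply le_antisymm
  · apply sInf_le
    exact ⟨w, b, h, by rw [h0]; rfl⟩
  · apply le_sInf
    rintro _ ⟨w', b', -, rfl⟩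
    exact_mod_cast hnn w' b'

theorem bounded_augmentation_needs_n_points {d : ℕ} (hd : 2 ≤ d)
    (n m : ℕ) (hn : 1 ≤ n) (hm : 1 ≤ m) (r : ℝ) (hr : 0 < r) :
    ∃ S : Set (Euc d × ℝ), LabelsPM S ∧ S.Finite ∧
      (posPts S).ncard = n ∧ (negPts S).ncard = m ∧
      ∀ S' ⊆ ballAug S r, (posPts S').Finite → (posPts S').ncard < n →
        alpha S S' = 0 := by
  obtain ⟨e, f, he, hf, hef⟩ := aux_basis hd
  have hee : ⟪e, e⟫ = (1 : ℝ) := by rw [real_inner_self_eq_norm_sq, he]; norm_num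
  have hff : ⟪f, f⟫ = (1 : ℝ) := by rw [real_inner_self_eq_norm_sq, hf]; norm_num
  have hfe : ⟪f, e⟫ = (0 : ℝ) := by rw [real_inner_comm, hef]
  obtain ⟨c, hc⟩ : ∃ c : ℝ, c = 1 + 3 * r + 2 * r * n := ⟨_, rfl⟩
  obtain ⟨M, hM⟩ : ∃ M : ℝ, M = (c * n) ^ 2 + r * (1 + 2 * (c * n)) := ⟨_, rfl⟩
  have hn0 : (0 : ℝ) ≤ n := Nat.cast_nonneg n
  have hrn : 0 ≤ r * n := by positivity
  have hc1 : 1 ≤ c := by linarith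
  obtain ⟨X, hX⟩ : ∃ X : ℕ → Euc d, ∀ i, X i = (c * i) • e + (c * i) ^ 2 • f := ⟨_, fun _ => rfl⟩
  obtain ⟨Y, hY⟩ : ∃ Y : ℕ → Euc d, ∀ k, Y k = (-(M + k)) • f := ⟨_, fun _ => rfl⟩
  have hXe : ∀ i, ⟪e, X i⟫ = c * i := fun i => by
    rw [hX, inner_add_right, inner_smul_right, inner_smul_right, hee, hef]; ring
  have hXf : ∀ i, ⟪f, X i⟫ = (c * i) ^ 2 := fun i => by
    rw [hX, inner_add_right, inner_smul_right, inner_smul_right, hfe, hff]; ring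
  have hYe : ∀ i, ⟪e, Y i⟫ = 0 := fun i => by
    rw [hY, inner_smul_right, hef]; ring
  have hYf : ∀ k : ℕ, ⟪f, Y k⟫ = -(M + k) := fun i => by
    rw [hY, inner_smul_right, hff]; ring
  have hsq : ∀ i j : ℕ, i ≠ j → (1 : ℝ) ≤ ((i : ℝ) - j) ^ 2 := by
    intro i j hij
    have : (1 : ℤ) ≤ ((i : ℤ) - j) ^ 2 := by
      have : (i : ℤ) - j ≠ 0 := by omega
      have := pow_pos (abs_pos.2 this) 2
      rw [sq_abs] at this
      omega
    exact_mod_cast this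
  have hXd : ∀ i j, i ≠ j → c ≤ dist (X i) (X j) := by
    intro i j hij
    have h1 : |⟪e, X i - X j⟫| ≤ ‖e‖ * ‖X i - X j‖ := abs_real_inner_le_norm _ _
    rw [he, one_mul, inner_sub_right, hXe, hXe, ← dist_eq_norm, ← mul_sub, abs_mul,
      abs_of_pos (by linarith : 0 < c)] at h1
    have h2 : 1 ≤ |(i : ℝ) - j| := by
      rw [← one_le_sq_iff_one_le_abs]; exact hsq i j hij
    nlinarith
  have hXinj : Function.Injective X := by
    intro i j hij
    by_contra hne
    have := hXd i j hne
    rw [hij, dist_self] at this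
    linarith
  have hYinj : Function.Injective Y := by
    intro i j hij
    have := hYf i
    rw [hij, hYf] at this
    exact_mod_cast (by linarith : (i : ℝ) = j)
  let S : Set (Euc d × ℝ) := (fun i => (X i, (1 : ℝ))) '' Set.Iio n ∪
    (fun i => (Y i, (-1 : ℝ))) '' Set.Iio m
  have hpos : posPts S = X '' Set.Iio n := by
    ext x
    simp only [posPts, S, Set.mem_setOf_eq, Set.mem_union, Set.mem_image, Prod.mk.injEq]
    constructor
    · rintro (⟨i, hi, h, -⟩ | ⟨i, hi, -, h⟩)
      · exact ⟨i, hi, h⟩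
      · norm_num at h
    · rintro ⟨i, hi, h⟩
      exact Or.inl ⟨i, hi, h, trivial⟩
  have hneg : negPts S = Y '' Set.Iio m := by
    ext x
    simp only [negPts, S, Set.mem_setOf_eq, Set.mem_union, Set.mem_image, Prod.mk.injEq]
    constructor
    · rintro (⟨i, hi, -, h⟩ | ⟨i, hi, h, -⟩)
      · norm_num at h
      · exact ⟨i, hi, h⟩
    · rintro ⟨i, hi, h⟩
      exact Or.inr ⟨i, hi, h, trivial⟩
  refine ⟨S, ?_, ?_, ?_, ?_, ?_⟩
  · rintro p (⟨i, -, rfl⟩ | ⟨i, -, rfl⟩)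
    · exact Or.inl rfl
    · exact Or.inr rfl
  · exact ((Set.finite_Iio n).image _).union ((Set.finite_Iio m).image _)
  · rw [hpos, Set.ncard_image_of_injective _ hXinj, ← Finset.coe_Iio, Set.ncard_coe_finset]
    simp
  · rw [hneg, Set.ncard_image_of_injective _ hYinj, ← Finset.coe_Iio, Set.ncard_coe_finset]
    simp
  intro S' hS' hfin hcard
  -- pigeonhole
  obtain ⟨i, hi, hfree⟩ : ∃ i < n, ∀ p ∈ posPts S', r < dist p (X i) := by
    by_contra! hcon
    choose! p hp hpd using hcon
    have hinj : Set.InjOn p (Set.Iio n) := by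
      intro i hi j hj hij
      by_contra hne
      have h1 := hXd i j hne
      have h2 := hpd i hi
      have h3 := hpd j hj
      rw [← hij] at h3
      have := dist_triangle_left (X i) (X j) (p i)
      linarith
    have h1 : (p '' Set.Iio n).ncard = n := by
      rw [Set.ncard_image_of_injOn hinj, ← Finset.coe_Iio, Set.ncard_coe_finset]
      simp
    have h2 : p '' Set.Iio n ⊆ posPts S' := by
      rintro _ ⟨i, hi, rfl⟩
      exact hp i hi
    have := Set.ncard_le_ncard h2 hfin
    omega
  have hi' : (i : ℝ) ≤ n := by exact_mod_cast hi.le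
  have hi0 : (0 : ℝ) ≤ i := Nat.cast_nonneg i
  have hci : c * i ≤ c * n := by gcongr
  have hci0 : 0 ≤ c * i := by positivity
  obtain ⟨w, hw⟩ : ∃ w : Euc d, w = f - (2 * (c * i)) • e := ⟨_, rfl⟩
  have hwi : ∀ x, ⟪w, x⟫ = ⟪f, x⟫ - 2 * (c * i) * ⟪e, x⟫ := by
    intro x
    rw [hw, inner_sub_left, real_inner_smul_left]
  have hw0 : w ≠ 0 := by
    intro h
    have := hwi f
    rw [h, hff, hef, inner_zero_left] at this
    norm_num at this
  have hwn : ‖w‖ ≤ 1 + 2 * (c * i) := by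
    rw [hw]
    refine (norm_sub_le _ _).trans ?_
    rw [norm_smul, he, hf, Real.norm_of_nonneg (by positivity)]
    linarith
  have hpert : ∀ p q : Euc d, dist p q ≤ r → |⟪w, p⟫ - ⟪w, q⟫| ≤ r * (1 + 2 * (c * i)) := by
    intro p q h
    rw [← inner_sub_right]
    refine (abs_real_inner_le_norm _ _).trans ?_
    rw [← dist_eq_norm, mul_comm]
    gcongr
  have hwX : ∀ j : ℕ, ⟪w, X j⟫ + (c * i) ^ 2 = c ^ 2 * ((i : ℝ) - j) ^ 2 := by
    intro j
    rw [hwi, hXe, hXf]; ring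
  have hwY : ∀ j : ℕ, ⟪w, Y j⟫ + (c * i) ^ 2 ≤ -(r * (1 + 2 * (c * i))) := by
    intro j
    rw [hwi, hYe, hYf, hM]
    have : (0 : ℝ) ≤ j := Nat.cast_nonneg j
    have h1 : (c * i) ^ 2 ≤ (c * n) ^ 2 := by gcongr
    have h2 : r * (c * i) ≤ r * (c * n) := by gcongr
    linarith
  have hR0 : 0 ≤ r * (1 + 2 * (c * i)) := by positivity
  have hRc : r * (1 + 2 * (c * i)) ≤ c ^ 2 := by
    have h2 : r * (c * i) ≤ r * (c * n) := by gcongr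
    have : c ^ 2 = c * (1 + 3 * r + 2 * r * n) := by rw [← hc]; ring
    nlinarith
  refine aux_alpha S S' w ((c * i) ^ 2) ⟨hw0, ?_⟩ (X i, 1) (Or.inl ⟨i, hi, rfl⟩) ?_
  swap
  · rw [hwX]; simp
  rintro ⟨x, y⟩ (hp | hp)
  · rcases hp with ⟨j, hj, h⟩ | ⟨j, hj, h⟩
    · obtain ⟨rfl, rfl⟩ := Prod.mk.inj h
      simp only [hwX]
      positivity
    · obtain ⟨rfl, rfl⟩ := Prod.mk.inj h
      have := hwY j
      simp only
      linarith
  · rcases hS' hp with ⟨h1, h2⟩ | ⟨h1, h2⟩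
    · simp only at h1 h2
      subst h1
      rw [hpos] at h2
      obtain ⟨j, hj, hd⟩ := aux_near X n hn x r h2
      have hij : i ≠ j := by
        rintro rfl
        exact absurd hd (not_le.2 (hfree x hp))
      have h3 := abs_le.1 (hpert _ _ hd)
      have h4 := hwX j
      have h5 := hsq i j hij
      have h6 : c ^ 2 ≤ c ^ 2 * ((i : ℝ) - j) ^ 2 := le_mul_of_one_le_right (by positivity) h5
      simp only
      linarith [h3.1]
    · simp only at h1 h2
      subst h1
      rw [hneg] at h2
      obtain ⟨j, hj, hd⟩ := aux_near Y m hm x r h2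
      have h3 := abs_le.1 (hpert _ _ hd)
      have h4 := hwY j
      simp only
      linarith [h3.2]
end

section
/- Let S ⊆ ℝ^d × {−1,+1} be a finite, linearly separable training set, and let S' be formed by random spherical perturbations of S: each point of S' has the form (x+z, y) where (x,y) ∈ S and z is drawn uniformly and independently from the sphere of radius r in ℝ^d. Then for all δ ∈ (0,1), with probability at least 1 − δ, the worst-case margin satisfies α(S,S') ≤ (√((2·ln|S'| + 2·ln(1/δ))/d)) · r. -/
open scoped RealInnerProductSpace ENNReal Classical
open Metric Set MeasureTheory

lemma exp_le_four_mul {s : ℝ} (h1 : 1 / 2 ≤ s) (h2 : s ≤ 1) : Real.exp s ≤ 4 * s := by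
  have h := Real.add_one_le_exp (-(s / 2))
  have e : Real.exp s * (Real.exp (-(s / 2)) * Real.exp (-(s / 2))) = 1 := by
    rw [← Real.exp_add, ← Real.exp_add]; simp; ring
  have h3 : (1 - s / 2) * (1 - s / 2) ≤ Real.exp (-(s / 2)) * Real.exp (-(s / 2)) := by
    apply mul_le_mul <;> first | linarith | positivity
  have h4 : 1 ≤ 4 * s * ((1 - s / 2) * (1 - s / 2)) := by
    nlinarith [mul_nonneg (sub_nonneg.2 h2) (show 0 ≤ 3 * s - 1 - s ^ 2 by nlinarith)]
  set q := Real.exp (-(s / 2)) * Real.exp (-(s / 2))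
  have hq : 0 < q := by positivity
  have h5 : 4 * s * ((1 - s / 2) * (1 - s / 2)) ≤ 4 * s * q :=
    mul_le_mul_of_nonneg_left h3 (by linarith)
  exact le_of_mul_le_mul_right (by linarith) hq

lemma cone_in_ball {d : ℕ} (u : Euc d) (hu : ‖u‖ = 1) {T : ℝ} (hT0 : 0 ≤ T) (hT : T ≤ 1) :
    ∃ c : Euc d, ∀ t ∈ Ioo (0 : ℝ) 1, ∀ x : Euc d, ‖x‖ = 1 → T ≤ ⟪u, x⟫ →
      t • x ∈ closedBall c (Real.exp (-(T ^ 2 / 2))) := by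
  have key : ∀ (c t : ℝ) (x : Euc d), ‖x‖ = 1 →
      ‖t • x - c • u‖ ^ 2 = t ^ 2 - 2 * t * c * ⟪u, x⟫ + c ^ 2 := by
    intro c t x hx
    rw [norm_sub_sq_real, norm_smul, norm_smul, hx, hu, real_inner_smul_left,
      real_inner_smul_right, real_inner_comm]
    simp only [mul_one, Real.norm_eq_abs, sq_abs]; ring
  have e2 : Real.exp (-(T ^ 2 / 2)) ^ 2 = Real.exp (-(T ^ 2)) := by
    rw [sq, ← Real.exp_add]; congr 1; ring
  by_cases h : T ^ 2 ≤ 1 / 2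
  · refine ⟨T • u, fun t ht x hx hux => ?_⟩
    rw [mem_closedBall, dist_eq_norm]
    refine le_of_sq_le_sq ?_ (Real.exp_pos _).le
    rw [e2, key _ _ _ hx]
    have := Real.add_one_le_exp (-(T ^ 2))
    have h3 : t * T * T ≤ t * T * ⟪u, x⟫ :=
      mul_le_mul_of_nonneg_left hux (mul_nonneg ht.1.le hT0)
    nlinarith [ht.1, ht.2, mul_nonneg ht.1.le (sub_nonneg.2 ht.2.le),
      mul_nonneg (sub_nonneg.2 ht.2.le) (sub_nonneg.2 h)]
  · push Not at h
    have hTp : 0 < T := by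
      rcases hT0.eq_or_lt with h0 | h0
      · rw [← h0] at h; norm_num at h
      · exact h0
    refine ⟨(1 / (2 * T)) • u, fun t ht x hx hux => ?_⟩
    rw [mem_closedBall, dist_eq_norm]
    refine le_of_sq_le_sq ?_ (Real.exp_pos _).le
    rw [e2, key _ _ _ hx]
    have h4 := exp_le_four_mul h.le (by nlinarith : T ^ 2 ≤ 1)
    have h5 : (1 / (2 * T)) ^ 2 ≤ Real.exp (-(T ^ 2)) := by
      rw [Real.exp_neg, div_pow, one_pow, one_div]
      apply inv_anti₀ (Real.exp_pos _)
      nlinarith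
    have h3 : t * (1 / (2 * T)) * T ≤ t * (1 / (2 * T)) * ⟪u, x⟫ :=
      mul_le_mul_of_nonneg_left hux (mul_nonneg ht.1.le (by positivity))
    have h6 : t * (1 / (2 * T)) * T = t / 2 := by field_simp
    nlinarith [mul_nonneg ht.1.le (sub_nonneg.2 ht.2.le)]

open scoped Pointwise in
lemma toSphere_cap {d : ℕ} (hd : 0 < d) (u : Euc d) (hu : ‖u‖ = 1) {T : ℝ} (hT0 : 0 ≤ T) :
    ((volume : Measure (Euc d)).toSphere) {x | T ≤ ⟪u, (x : Euc d)⟫} ≤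
      ENNReal.ofReal (Real.exp (-(d * T ^ 2 / 2))) *
        ((volume : Measure (Euc d)).toSphere) univ := by
  by_cases hT : T ≤ 1
  · obtain ⟨c, hc⟩ := cone_in_ball u hu hT0 hT
    have hm : MeasurableSet {x : sphere (0 : Euc d) 1 | T ≤ ⟪u, (x : Euc d)⟫} :=
      (isClosed_le (by fun_prop) (by fun_prop)).measurableSet
    rw [Measure.toSphere_apply' _ hm, Measure.toSphere_apply_univ]
    have hsub : Ioo (0 : ℝ) 1 • ((↑) '' {x : sphere (0 : Euc d) 1 | T ≤ ⟪u, (x : Euc d)⟫} : Set (Euc d))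
        ⊆ closedBall c (Real.exp (-(T ^ 2 / 2))) := by
      rintro _ ⟨t, ht, _, ⟨x, hx, rfl⟩, rfl⟩
      exact hc t ht x (by simpa using x.2) hx
    have h1 := measure_mono (μ := (volume : Measure (Euc d))) hsub
    rw [Measure.addHaar_closedBall _ _ (Real.exp_pos _).le] at h1
    have h2 : Real.exp (-(T ^ 2 / 2)) ^ Module.finrank ℝ (Euc d) =
        Real.exp (-(d * T ^ 2 / 2)) := by
      rw [← Real.exp_nat_mul]; congr 1; simp; ring
    rw [h2] at h1
    refine (mul_le_mul_right h1 _).trans_eq ?_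
    ring
  · have : {x : sphere (0 : Euc d) 1 | T ≤ ⟪u, (x : Euc d)⟫} = ∅ := by
      ext x
      simp only [mem_setOf_eq, mem_empty_iff_false, iff_false]
      intro h
      have := real_inner_le_norm u (x : Euc d)
      rw [hu, norm_eq_of_mem_sphere] at this
      linarith
    rw [this]; simp

lemma sphere_univ_ne_zero {d : ℕ} (hd : 0 < d) :
    ((volume : Measure (Euc d)).toSphere) univ ≠ 0 := by
  rw [Measure.measure_univ_ne_zero]
  rw [Ne, Measure.toSphere_eq_zero_iff_finrank]
  simp; omega

lemma uniformSphere_prob {d : ℕ} (hd : 0 < d) (r : ℝ) :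
    IsProbabilityMeasure (uniformSphere d r) := by
  constructor
  rw [uniformSphere, Measure.smul_apply, Measure.map_apply (by fun_prop) MeasurableSet.univ,
    preimage_univ, Measure.map_apply (by fun_prop) MeasurableSet.univ, preimage_univ, smul_eq_mul]
  exact ENNReal.inv_mul_cancel (sphere_univ_ne_zero hd) (measure_ne_top _ _)

lemma uniformSphere_cap {d : ℕ} (hd : 0 < d) {r : ℝ} (hr : 0 < r) (v : Euc d) (hv : v ≠ 0)
    {T : ℝ} (hT0 : 0 ≤ T) :
    uniformSphere d r {z | T * r * ‖v‖ ≤ ⟪v, z⟫} ≤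
      ENNReal.ofReal (Real.exp (-(d * T ^ 2 / 2))) := by
  have hm : MeasurableSet {z : Euc d | T * r * ‖v‖ ≤ ⟪v, z⟫} :=
    (isClosed_le (by fun_prop) (by fun_prop)).measurableSet
  have hv' : 0 < ‖v‖ := norm_pos_iff.2 hv
  have hmr : Measurable (fun x : Euc d => r • x) := by fun_prop
  rw [uniformSphere, Measure.smul_apply, Measure.map_apply hmr hm,
    Measure.map_apply (by fun_prop) (hmr hm), smul_eq_mul]
  have : ((Subtype.val : sphere (0 : Euc d) 1 → Euc d) ⁻¹'
      ((fun x : Euc d => r • x) ⁻¹' {z : Euc d | T * r * ‖v‖ ≤ ⟪v, z⟫})) = {x : sphere (0 : Euc d) 1 | T ≤ ⟪(‖v‖⁻¹ • v), (x : Euc d)⟫} := by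
    ext x
    simp only [mem_preimage, mem_setOf_eq, real_inner_smul_left, real_inner_smul_right]
    rw [inv_mul_eq_div, le_div_iff₀ hv', mul_right_comm, mul_comm _ r,
      mul_le_mul_iff_right₀ hr]
  rw [this, mul_comm, ← div_eq_mul_inv]
  apply ENNReal.div_le_of_le_mul
  exact toSphere_cap hd _ (by rw [norm_smul, norm_inv, norm_norm, inv_mul_cancel₀ hv'.ne']) hT0

lemma infDist_hyperplane_le {d : ℕ} (w : Euc d) (hw : w ≠ 0) (b : ℝ) (x : Euc d) :
    infDist x (hyperplane w b) ≤ |⟪w, x⟫ + b| / ‖w‖ := by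
  have hw' : 0 < ‖w‖ := norm_pos_iff.2 hw
  have hmem : x - ((⟪w, x⟫ + b) / ‖w‖ ^ 2) • w ∈ hyperplane w b := by
    simp only [hyperplane, mem_setOf_eq, inner_sub_right, real_inner_smul_right,
      real_inner_self_eq_norm_sq]
    field_simp; ring
  refine (infDist_le_dist_of_mem hmem).trans_eq ?_
  rw [dist_eq_norm, sub_sub_cancel, norm_smul, Real.norm_eq_abs, abs_div,
    abs_of_pos (by positivity : 0 < ‖w‖ ^ 2)]
  field_simp

lemma linMargin_le {d : ℕ} (S : Set (Euc d × ℝ)) (w : Euc d) (hw : w ≠ 0) (b : ℝ)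
    (p : Euc d × ℝ) (hp : p ∈ S) : linMargin S w b ≤ |⟪w, p.1⟫ + b| / ‖w‖ := by
  refine le_trans ?_ (infDist_hyperplane_le w hw b p.1)
  exact ciInf_le (f := fun p : S => infDist (p : Euc d × ℝ).1 (hyperplane w b))
    ⟨0, by rintro _ ⟨q, rfl⟩; exact infDist_nonneg⟩ ⟨p, hp⟩

lemma alpha_le_of {d : ℕ} {S S' : Set (Euc d × ℝ)} {M : ℝ} (w : Euc d) (b : ℝ)
    (h : IsLinSep w b (S ∪ S')) (hM : linMargin S w b ≤ M) : alpha S S' ≤ (M : EReal) := by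
  rw [alpha, if_pos ⟨w, b, h⟩]
  refine le_trans (sInf_le ?_) (EReal.coe_le_coe_iff.2 hM)
  exact ⟨w, b, h, rfl⟩

lemma alpha_le_on_good {d : ℕ} {S : Set (Euc d × ℝ)} (hSfin : S.Finite) (hSlab : LabelsPM S)
    (hpos : (posPts S).Nonempty) {M : ℝ} (hM : 0 ≤ M) {w : Euc d} {b : ℝ}
    (hwb : IsLinSep w b S) (hmar : M < linMargin S w b) {m : ℕ}
    (base : Fin m → Euc d × ℝ) (hbase : ∀ k, base k ∈ S) (z : Fin m → Euc d)
    (hz : ∀ k, -(M * ‖w‖) ≤ (base k).2 * ⟪w, z k⟫) :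
    alpha S (Set.range fun k => ((base k).1 + z k, (base k).2)) ≤ (M : EReal) := by
  have hw' : 0 < ‖w‖ := norm_pos_iff.2 hwb.1
  have hfar : ∀ p ∈ S, M * ‖w‖ ≤ |⟪w, p.1⟫ + b| := fun p hp => by
    rw [← le_div_iff₀ hw']
    exact hmar.le.trans (linMargin_le S w hwb.1 b p hp)
  have hfin : (posPts S).Finite :=
    (hSfin.image Prod.fst).subset fun x hx => ⟨_, hx, rfl⟩
  obtain ⟨x₀, hx₀, hmin⟩ := hfin.exists_minimalFor (fun x => ⟪w, x⟫) _ hpos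
  have hmin' : ∀ x ∈ posPts S, ⟪w, x₀⟫ ≤ ⟪w, x⟫ := fun x hx => by
    rcases le_total ⟪w, x₀⟫ ⟪w, x⟫ with h | h
    · exact h
    · exact hmin hx h
  have hMw : 0 ≤ M * ‖w‖ := by positivity
  -- strong separation of S
  have hstrong : ∀ p ∈ S, M * ‖w‖ ≤ p.2 * (⟪w, p.1⟫ + (-⟪w, x₀⟫ + M * ‖w‖)) := by
    rintro ⟨x, y⟩ hp
    rcases hSlab _ hp with h | h
    · simp only at h; subst h
      have := hmin' x hp
      simp only; linarith
    · simp only at h; subst h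
      have h1 := hwb.2 _ hp
      have h2 := hfar _ hp
      have h3 := hwb.2 _ hx₀
      have h4 := hfar _ hx₀
      simp only at h1 h2 h3 h4 ⊢
      rw [abs_of_nonpos (by linarith)] at h2
      rw [abs_of_nonneg (by linarith)] at h4
      linarith
  refine alpha_le_of w (-⟪w, x₀⟫ + M * ‖w‖) ⟨hwb.1, ?_⟩ ?_
  · rintro p (hp | ⟨k, rfl⟩)
    · exact hMw.trans (hstrong p hp)
    · have h1 := hstrong _ (hbase k)
      have h2 := hz k
      simp only [inner_add_right]
      nlinarith
  · refine (linMargin_le S w hwb.1 _ _ hx₀).trans_eq ?_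
    simp only
    rw [add_neg_cancel_left, abs_of_nonneg hMw, mul_div_cancel_right₀ _ hw'.ne']

/-- Theorem 7 of the paper: if `S'` consists of `m` random spherical
perturbations of radius `r` of points of the linearly separable set `S`, then with
probability at least `1 - δ`,
`α(S,S') ≤ √((2 ln|S'| + 2 ln(1/δ))/d) · r`. -/
theorem random_perturbation_margin_upper_bound {d : ℕ} (hd : 0 < d)
    (S : Set (Euc d × ℝ)) (hSfin : S.Finite) (hSlab : LabelsPM S)
    (hpos : (posPts S).Nonempty) (hneg : (negPts S).Nonempty)
    (hsep : ∃ w b, IsLinSep w b S)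
    (r : ℝ) (hr : 0 < r) (m : ℕ) (hm : 0 < m)
    (base : Fin m → Euc d × ℝ) (hbase : ∀ k, base k ∈ S)
    (δ : ℝ) (hδ : δ ∈ Set.Ioo (0 : ℝ) 1) :
    ENNReal.ofReal (1 - δ) ≤
      (Measure.pi fun _ : Fin m => uniformSphere d r)
        {z | alpha S (Set.range fun k => ((base k).1 + z k, (base k).2)) ≤
          ((Real.sqrt ((2 * Real.log m + 2 * Real.log (1 / δ)) / d) * r : ℝ) : EReal)} := by
  have hprob := uniformSphere_prob hd r
  have hd' : (0 : ℝ) < d := by exact_mod_cast hd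
  have hm' : (0 : ℝ) < m := by exact_mod_cast hm
  set T := Real.sqrt ((2 * Real.log m + 2 * Real.log (1 / δ)) / d) with hTdef
  have hT0 : 0 ≤ T := Real.sqrt_nonneg _
  have hM : 0 ≤ T * r := by positivity
  by_cases hex : ∃ w b, IsLinSep w b S ∧ T * r < linMargin S w b
  · obtain ⟨w, b, hwb, hmar⟩ := hex
    set μ := Measure.pi fun _ : Fin m => uniformSphere d r
    set B : Fin m → Set (Fin m → Euc d) :=
      fun k => Function.eval k ⁻¹' {x | T * r * ‖(-(base k).2) • w‖ ≤ ⟪(-(base k).2) • w, x⟫}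
    have hlab : ∀ k, |(base k).2| = 1 := fun k => by
      rcases hSlab _ (hbase k) with h | h <;> simp [h]
    have hms : ∀ k, MeasurableSet {x : Euc d | T * r * ‖(-(base k).2) • w‖ ≤ ⟪(-(base k).2) • w, x⟫} :=
      fun k => (isClosed_le (by fun_prop) (by fun_prop)).measurableSet
    have hBm : ∀ k, MeasurableSet (B k) := fun k => measurable_pi_apply k (hms k)
    have hexp : Real.exp (-(d * T ^ 2 / 2)) = δ / m := by
      have hlog : 0 ≤ Real.log m := Real.log_natCast_nonneg m
      have hlog2 : 0 ≤ Real.log (1 / δ) := Real.log_nonneg (by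
        rw [le_div_iff₀ hδ.1]; linarith [hδ.2])
      rw [hTdef, Real.sq_sqrt (by positivity)]
      have : -(d * ((2 * Real.log m + 2 * Real.log (1 / δ)) / d) / 2) = Real.log (δ / m) := by
        rw [Real.log_div hδ.1.ne' hm'.ne', one_div, Real.log_inv]
        field_simp; ring
      rw [this, Real.exp_log (div_pos hδ.1 hm')]
    have hB : ∀ k, μ (B k) ≤ ENNReal.ofReal (δ / m) := fun k => by
      rw [(measurePreserving_eval (fun _ : Fin m => uniformSphere d r) k).measure_preimage
        (hms k).nullMeasurableSet, ← hexp]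
      refine uniformSphere_cap hd hr _ ?_ hT0
      refine smul_ne_zero ?_ hwb.1
      rw [neg_ne_zero, ← abs_pos, hlab k]; exact one_pos
    have hU : μ (⋃ k, B k) ≤ ENNReal.ofReal δ := by
      refine (measure_iUnion_fintype_le _ _).trans ((Finset.sum_le_sum fun k _ => hB k).trans ?_)
      rw [Finset.sum_const, Finset.card_univ, Fintype.card_fin, nsmul_eq_mul,
        ← ENNReal.ofReal_natCast, ← ENNReal.ofReal_mul hm'.le, mul_div_cancel₀ _ hm'.ne']
    have hsub : (⋃ k, B k)ᶜ ⊆ {z | alpha S (Set.range fun k => ((base k).1 + z k, (base k).2)) ≤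
          ((T * r : ℝ) : EReal)} := by
      intro z hz
      simp only [mem_compl_iff, mem_iUnion, not_exists] at hz
      refine alpha_le_on_good hSfin hSlab hpos hM hwb hmar base hbase z fun k => ?_
      have h := hz k
      simp only [B, mem_preimage, mem_setOf_eq, Function.eval, not_le, norm_smul, norm_neg,
        Real.norm_eq_abs, hlab k, one_mul, real_inner_smul_left] at h
      linarith
    refine le_trans ?_ (measure_mono hsub)
    rw [prob_compl_eq_one_sub (MeasurableSet.iUnion hBm), ENNReal.ofReal_sub _ hδ.1.le,
      ENNReal.ofReal_one]
    exact tsub_le_tsub_left hU 1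
  · push Not at hex
    have : {z : Fin m → Euc d | alpha S (Set.range fun k => ((base k).1 + z k, (base k).2)) ≤
          ((T * r : ℝ) : EReal)} = univ := by
      refine eq_univ_of_forall fun z => ?_
      simp only [mem_setOf_eq]
      by_cases h : ∃ w b, IsLinSep w b (S ∪ Set.range fun k => ((base k).1 + z k, (base k).2))
      · obtain ⟨w, b, h⟩ := h
        exact alpha_le_of w b h (hex w b ⟨h.1, fun p hp => h.2 p (Or.inl hp)⟩)
      · rw [alpha, if_neg h]; exact bot_le
    rw [this, measure_univ]
    exact ENNReal.ofReal_le_one.2 (by linarith [hδ.1])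
end

section
/- Let S ⊆ ℝ^d × {−1,+1} be a finite separable training set and S' ⊆ ℝ^d × {−1,+1} an artificial set with X₊' = {x : (x,1) ∈ S'} and X₋' = {x : (x,−1) ∈ S'}. If |X₊'| ≤ d or |X₋'| ≤ d, then for every ε ∈ [0,∞], either R_ε(S ∪ S') = ∅, or there exists f ∈ R_ε(S ∪ S') with γ_f(S,S') = 0. -/
open scoped RealInnerProductSpace ENNReal Classical
open Metric Set MeasureTheory

theorem aux_extreme {d : ℕ} (hd : d ≠ 0) (X X' : Set (Euc d)) (hX : X.Finite)
    (hne : X.Nonempty) (hX' : X'.Finite) (hc : X'.ncard ≤ d) :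
    ∃ x ∈ X, x ∉ interior (convexHull ℝ (X ∪ X')) := by
  by_contra! h
  have : Nonempty (Fin d) := ⟨⟨0, Nat.pos_of_ne_zero hd⟩⟩
  have : Nontrivial (Euc d) := inferInstance
  have hK : IsCompact (convexHull ℝ (X ∪ X')) := (hX.union hX').isCompact_convexHull (𝕜 := ℝ)
  have hext : (convexHull ℝ (X ∪ X')).extremePoints ℝ ⊆ X' := by
    intro x hx
    rcases extremePoints_convexHull_subset hx with h1 | h1
    · exact absurd hx (Set.disjoint_left.1 (disjoint_interior_extremePoints _) (h x h1))
    · exact h1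
  have hsub : convexHull ℝ (X ∪ X') ⊆ convexHull ℝ X' := by
    rw [← closure_convexHull_extremePoints hK (convex_convexHull ℝ _)]
    exact closure_minimal (convexHull_mono hext) (hX'.isCompact_convexHull (𝕜 := ℝ)).isClosed
  obtain ⟨x, hx⟩ := hne
  have hint : (interior (convexHull ℝ X')).Nonempty := ⟨x, interior_mono hsub (h x hx)⟩
  have hX'ne : X'.Nonempty := by
    rw [← convexHull_nonempty_iff (𝕜 := ℝ)]
    exact hint.mono interior_subset
  rw [interior_convexHull_nonempty_iff_affineSpan_eq_top] at hint
  have hv : vectorSpan ℝ X' = ⊤ := by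
    rw [← direction_affineSpan, hint, AffineSubspace.direction_top]
  have hfr : Module.finrank ℝ (vectorSpan ℝ X') = d := by
    rw [hv, finrank_top]; simp
  have := hX'.fintype
  have hpos : 0 < X'.ncard := (Set.ncard_pos hX').2 hX'ne
  have := finrank_vectorSpan_range_le ℝ (Subtype.val : X' → Euc d) (n := X'.ncard - 1)
    (by rw [← Nat.card_eq_fintype_card]; change X'.ncard = _; omega)
  rw [Subtype.range_coe] at this
  omega

theorem circ_singleton {d : ℕ} (x : Euc d) : circumradius {x} = 0 := by
  unfold circumradius
  refine le_antisymm (iInf_le_of_le x ?_) bot_le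
  simp

theorem sep_of_resp {d : ℕ} {ε : ℝ≥0∞} {f : Euc d → ℝ} {T : Set (Euc d × ℝ)}
    (hT : LabelsPM T) (h : RespectfulOf ε f T) : Separates f T := by
  rintro ⟨x, y⟩ hp
  rcases hT _ hp with hy | hy <;> simp only at hy <;> subst hy
  · exact h.1 {x} (by simpa [posPts] using hp) (by simp [circ_singleton]) x (by simp)
  · exact h.2 {x} (by simpa [negPts] using hp) (by simp [circ_singleton]) x (by simp)

theorem margin_zero {d : ℕ} {ε : ℝ≥0∞} {f : Euc d → ℝ} {S S' : Set (Euc d × ℝ)}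
    (hT : LabelsPM (S ∪ S')) (h : RespectfulOf ε f (S ∪ S')) (p : Euc d × ℝ) (hp : p ∈ S)
    (hcl : p.1 ∈ closure (f ⁻¹' {-p.2})) : clsMarginAug f S S' = 0 := by
  unfold clsMarginAug
  rw [if_pos (sep_of_resp hT h)]
  have : clsMargin f S = 0 := by
    unfold clsMargin
    apply le_antisymm
    · refine (ciInf_le ⟨0, ?_⟩ (⟨p, hp⟩ : S)).trans (Metric.infDist_zero_of_mem_closure hcl).le
      rintro _ ⟨q, rfl⟩
      exact Metric.infDist_nonneg
    · exact Real.iInf_nonneg fun _ => Metric.infDist_nonneg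
  rw [this]; rfl

/-- Theorem 12 of the paper: if `|X₊'| ≤ d` or `|X₋'| ≤ d`, then for
every `ε ∈ [0,∞]` either `R_ε(S ∪ S') = ∅` or some `f ∈ R_ε(S ∪ S')` has
`γ_f(S,S') = 0`. -/
theorem nonlinear_augmentation_size_lower_bound {d : ℕ} (S S' : Set (Euc d × ℝ))
    (hSfin : S.Finite) (hSlab : LabelsPM S)
    (hpos : (posPts S).Nonempty) (hneg : (negPts S).Nonempty)
    (hS'lab : LabelsPM S')
    (hsep : ∃ f, IsClassifier f ∧ Separates f S)
    (hcard : ((posPts S').Finite ∧ (posPts S').ncard ≤ d) ∨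
             ((negPts S').Finite ∧ (negPts S').ncard ≤ d)) :
    ∀ ε : ℝ≥0∞, respectfulSet ε (S ∪ S') = ∅ ∨
      ∃ f ∈ respectfulSet ε (S ∪ S'), clsMarginAug f S S' = 0 := by
  intro ε
  rw [or_iff_not_imp_left]
  intro hnon
  obtain ⟨g, hg, hgr⟩ := Set.nonempty_iff_ne_empty.2 hnon
  have hd : d ≠ 0 := by
    rintro rfl
    obtain ⟨f, -, hf⟩ := hsep
    obtain ⟨x, hx⟩ := hpos
    obtain ⟨y, hy⟩ := hneg
    have h1 := hf _ hx
    have h2 := hf _ hy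
    rw [Subsingleton.elim y x] at h2
    simp only at h1 h2
    linarith
  have hT : LabelsPM (S ∪ S') := by
    rintro p (hp | hp)
    exacts [hSlab p hp, hS'lab p hp]
  have hfin : ∀ y : ℝ, {x : Euc d | (x, y) ∈ S}.Finite := fun y =>
    (hSfin.image Prod.fst).subset fun x hx => ⟨(x, y), hx, rfl⟩
  rcases hcard with ⟨hF, hc⟩ | ⟨hF, hc⟩
  · obtain ⟨x, hxS, hx⟩ := aux_extreme hd _ _ (hfin 1) hpos hF hc
    let f : Euc d → ℝ := fun z =>
      if ∃ A ⊆ posPts (S ∪ S'), circumradius A ≤ ε ∧ z ∈ convexHull ℝ A then 1 else -1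
    have hfr : RespectfulOf ε f (S ∪ S') := by
      refine ⟨fun A hA hr z hz => if_pos ⟨A, hA, hr, hz⟩, fun B hB hr z hz => if_neg ?_⟩
      rintro ⟨A, hA, hrA, hzA⟩
      have h1 := hgr.1 A hA hrA z hzA
      have h2 := hgr.2 B hB hr z hz
      linarith
    refine ⟨f, ⟨fun z => ite_eq_or_eq _ _ _, hfr⟩, margin_zero hT hfr (x, 1) hxS ?_⟩
    rw [← mem_compl_iff, ← closure_compl] at hx
    refine closure_mono ?_ hx
    intro z hz
    refine if_neg ?_
    rintro ⟨A, hA, -, hzA⟩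
    exact hz (convexHull_mono hA hzA)
  · obtain ⟨x, hxS, hx⟩ := aux_extreme hd _ _ (hfin (-1)) hneg hF hc
    let f : Euc d → ℝ := fun z =>
      if ∃ A ⊆ negPts (S ∪ S'), circumradius A ≤ ε ∧ z ∈ convexHull ℝ A then -1 else 1
    have hfr : RespectfulOf ε f (S ∪ S') := by
      refine ⟨fun B hB hr z hz => if_neg ?_, fun A hA hr z hz => if_pos ⟨A, hA, hr, hz⟩⟩
      rintro ⟨A, hA, hrA, hzA⟩
      have h1 := hgr.2 A hA hrA z hzA
      have h2 := hgr.1 B hB hr z hz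
      linarith
    refine ⟨f, ⟨fun z => (ite_eq_or_eq _ _ _).symm, hfr⟩, margin_zero hT hfr (x, -1) hxS ?_⟩
    rw [← mem_compl_iff, ← closure_compl] at hx
    refine closure_mono ?_ hx
    intro z hz
    have : f z = 1 := by
      refine if_neg ?_
      rintro ⟨A, hA, -, hzA⟩
      exact hz (convexHull_mono hA hzA)
    simp [this]
end

section
/- For every finite training set S ⊆ ℝ^d × {−1,+1}, every ε ∈ (0,∞], and every r with 0 < r ≤ ε, there exists an artificial set S' ⊆ S_r with |S'| = |S|·(d+1) such that every f ∈ R_ε(S ∪ S') satisfies γ_f(S,S') > 0. -/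
open scoped RealInnerProductSpace ENNReal Classical
open Metric Set MeasureTheory

theorem aux_simplex (d : ℕ) : ∃ (v : Fin (d + 1) → Euc d) (ρ M : ℝ), Function.Injective v ∧ 0 < ρ ∧
    0 < M ∧ (∀ i, ‖v i‖ ≤ M) ∧ Metric.ball 0 ρ ⊆ convexHull ℝ (Set.range v) := by
  obtain ⟨b⟩ := AffineBasis.exists_affineBasis_of_finiteDimensional (k := ℝ) (P := Euc d)
    (ι := Fin (d + 1)) (by simp)
  have hc := b.centroid_mem_interior_convexHull
  set c := Finset.univ.centroid ℝ b with hcdef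
  obtain ⟨ρ, hρ, hball⟩ := Metric.mem_nhds_iff.1 (mem_interior_iff_mem_nhds.1 hc)
  refine ⟨fun i => b i - c, ρ, (∑ i, ‖b i - c‖) + 1, ?_, hρ, by positivity, ?_, ?_⟩
  · intro i j h
    exact b.ind.injective (sub_left_injective h)
  · intro i
    have := Finset.single_le_sum (f := fun i => ‖b i - c‖) (fun i _ => norm_nonneg _)
      (Finset.mem_univ i)
    exact this.trans (by linarith)
  · intro z hz
    have h1 : z + c ∈ convexHull ℝ (Set.range b) := by
      apply hball
      simpa [Metric.mem_ball, dist_eq_norm] using hz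
    have h2 : convexHull ℝ (Set.range b) ⊆
        (fun w => w + (-c)) ⁻¹' convexHull ℝ (Set.range fun i => b i - c) := by
      apply convexHull_min
      · rintro _ ⟨i, rfl⟩
        apply subset_convexHull
        exact ⟨i, by simp [sub_eq_add_neg]⟩
      · exact (convex_convexHull ℝ _).translate_preimage_left _
    have := h2 h1
    simpa using this

theorem aux_sep {d : ℕ} (X : Set (Euc d)) (hX : X.Finite) :
    ∃ δ : ℝ, 0 < δ ∧ ∀ x ∈ X, ∀ y ∈ X, x ≠ y → δ < dist x y := by
  have := hX.to_subtype
  obtain ⟨c, hc0, hc⟩ := ENNReal.lt_iff_exists_nnreal_btwn.1 (Set.einfsep_pos_of_finite (s := X))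
  refine ⟨c, by exact_mod_cast hc0, fun x hx y hy hxy => ?_⟩
  have h := lt_of_lt_of_le hc (Set.einfsep_le_edist_of_mem hx hy hxy)
  rw [edist_nndist] at h
  rw [dist_nndist]
  exact_mod_cast h

theorem aux_ball {d : ℕ} (v : Fin (d + 1) → Euc d) (ρ t : ℝ) (ht : 0 < t) (x : Euc d)
    (h : Metric.ball 0 ρ ⊆ convexHull ℝ (Set.range v)) :
    Metric.ball x (t * ρ) ⊆ convexHull ℝ (Set.range fun i => x + t • v i) := by
  intro z hz
  have h1 : t⁻¹ • (z - x) ∈ convexHull ℝ (Set.range v) := by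
    apply h
    rw [mem_ball_zero_iff, norm_smul, norm_inv, Real.norm_of_nonneg ht.le, inv_mul_lt_iff₀ ht]
    simpa [dist_eq_norm] using hz
  have h3 : convexHull ℝ (Set.range v) ⊆
      (t • LinearMap.id : Euc d →ₗ[ℝ] Euc d) ⁻¹'
        ((fun w => x + w) ⁻¹' convexHull ℝ (Set.range fun i => x + t • v i)) := by
    apply convexHull_min
    · rintro _ ⟨i, rfl⟩
      apply subset_convexHull
      exact ⟨i, by simp⟩
    · exact ((convex_convexHull ℝ _).translate_preimage_right _).linear_preimage _
  have := h3 h1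
  simpa [smul_smul, ht.ne'] using this

theorem aux_circ {d : ℕ} (A : Set (Euc d)) (x : Euc d) (r : ℝ) (h : ∀ y ∈ A, dist x y ≤ r) :
    circumradius A ≤ ENNReal.ofReal r := by
  refine (iInf_le _ x).trans (iSup₂_le fun y hy => ?_)
  rw [edist_dist]
  exact ENNReal.ofReal_le_ofReal (h y hy)

theorem aux_resp {d : ℕ} {ε : ℝ≥0∞} {f : Euc d → ℝ} {T : Set (Euc d × ℝ)} (hf : RespectfulOf ε f T)
    {y : ℝ} (hy : y = 1 ∨ y = -1) (A : Set (Euc d)) (hA : ∀ a ∈ A, (a, y) ∈ T)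
    (hc : circumradius A ≤ ε) : ∀ x ∈ convexHull ℝ A, f x = y := by
  rcases hy with rfl | rfl
  · exact hf.1 A hA hc
  · exact hf.2 A hA hc

/-- Theorem 15 of the paper: for any `S`, `ε ∈ (0,∞]` and
`0 < r ≤ ε`, there is `S' ⊆ S_r` with `|S'| = |S|(d+1)` such that every
`f ∈ R_ε(S ∪ S')` has positive margin `γ_f(S,S') > 0`. -/
theorem sufficient_augmentation_positive_margin {d : ℕ} (S : Set (Euc d × ℝ))
    (hSfin : S.Finite) (hSlab : LabelsPM S)
    (hpos : (posPts S).Nonempty) (hneg : (negPts S).Nonempty)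
    (ε : ℝ≥0∞) (hε : 0 < ε) (r : ℝ) (hr : 0 < r) (hrε : ENNReal.ofReal r ≤ ε) :
    ∃ S' : Set (Euc d × ℝ), S' ⊆ ballAug S r ∧ S'.Finite ∧
      S'.ncard = S.ncard * (d + 1) ∧
      ∀ f ∈ respectfulSet ε (S ∪ S'), 0 < clsMarginAug f S S' := by
  obtain ⟨v, ρ, M, hv, hρ, hM, hvM, hball⟩ := aux_simplex d
  obtain ⟨δ, hδ, hsep⟩ := aux_sep (Prod.fst '' S) (hSfin.image _)
  set t := min r (δ / 2) / M with ht
  have ht0 : 0 < t := div_pos (lt_min hr (by linarith)) hM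
  have hnorm : ∀ i, ‖t • v i‖ ≤ min r (δ / 2) := by
    intro i
    rw [norm_smul, Real.norm_of_nonneg ht0.le]
    calc t * ‖v i‖ ≤ t * M := mul_le_mul_of_nonneg_left (hvM i) ht0.le
      _ = _ := by rw [ht]; field_simp
  have hnr : ∀ i, ‖t • v i‖ ≤ r := fun i => (hnorm i).trans (min_le_left _ _)
  have hnd : ∀ i, ‖t • v i‖ ≤ δ / 2 := fun i => (hnorm i).trans (min_le_right _ _)
  let g : (Euc d × ℝ) × Fin (d + 1) → Euc d × ℝ := fun q => (q.1.1 + t • v q.2, q.1.2)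
  have hfin : (S ×ˢ (Set.univ : Set (Fin (d + 1)))).Finite := hSfin.prod Set.finite_univ
  refine ⟨g '' (S ×ˢ Set.univ), ?_, hfin.image _, ?_, ?_⟩
  · rintro _ ⟨⟨⟨x, y⟩, i⟩, ⟨hp, -⟩, rfl⟩
    have hd : dist (x + t • v i) x ≤ r := by simpa [dist_eq_norm] using hnr i
    simp only at hp
    rcases hSlab _ hp with h | h <;> simp only at h <;> subst h
    · exact Or.inl ⟨rfl, (Metric.infDist_le_dist_of_mem (show x ∈ posPts S from hp)).trans hd⟩
    · exact Or.inr ⟨rfl, (Metric.infDist_le_dist_of_mem (show x ∈ negPts S from hp)).trans hd⟩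
  · rw [Set.ncard_image_of_injOn, Set.ncard_prod, Set.ncard_univ, Nat.card_fin]
    rintro ⟨⟨x, y⟩, i⟩ ⟨hp, -⟩ ⟨⟨x', y'⟩, j⟩ ⟨hp', -⟩ h
    simp only [g, Prod.mk.injEq] at h hp hp'
    obtain ⟨h, rfl⟩ := h
    have hx : x = x' := by
      by_contra hne
      have h1 := hsep x ⟨_, hp, rfl⟩ x' ⟨_, hp', rfl⟩ hne
      have h2 : x - x' = t • v j - t • v i := by
        rw [sub_eq_sub_iff_add_eq_add, h, add_comm]
      rw [dist_eq_norm, h2] at h1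
      have := norm_sub_le (t • v j) (t • v i)
      linarith [hnd i, hnd j]
    subst hx
    have h3 : i = j := hv (smul_right_injective _ ht0.ne' (add_left_cancel h))
    rw [h3]
  · rintro f ⟨-, hf⟩
    have hlab : LabelsPM (S ∪ g '' (S ×ˢ Set.univ)) := by
      rintro p (hp | ⟨q, ⟨hq, -⟩, rfl⟩)
      · exact hSlab p hp
      · exact hSlab q.1 hq
    have hsepf : Separates f (S ∪ g '' (S ×ˢ Set.univ)) := by
      intro p hp
      refine aux_resp hf (hlab p hp) {p.1} ?_ ?_ p.1 (by simp)
      · rintro a rfl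
        exact hp
      · refine (aux_circ _ p.1 0 ?_).trans (by simp)
        rintro a rfl
        simp
    rw [clsMarginAug, if_pos hsepf]
    have key : t * ρ ≤ clsMargin f S := by
      obtain ⟨xp, hxp⟩ := hpos
      obtain ⟨xn, hxn⟩ := hneg
      have : Nonempty S := ⟨⟨_, hxp⟩⟩
      refine le_ciInf ?_
      rintro ⟨⟨x, y⟩, hp⟩
      have hy := hSlab _ hp
      simp only at hy ⊢
      have hne : (f ⁻¹' {-y}).Nonempty := by
        rcases hy with rfl | rfl
        · exact ⟨xn, hsepf _ (Or.inl hxn)⟩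
        · exact ⟨xp, by simpa using hsepf _ (Or.inl hxp)⟩
      rw [Metric.le_infDist hne]
      intro z hz
      by_contra! hlt
      have hfz : f z = y := by
        refine aux_resp hf hy (Set.range fun i => x + t • v i) ?_ ?_ z
          (aux_ball v ρ t ht0 x hball (by rwa [Metric.mem_ball, dist_comm]))
        · rintro _ ⟨i, rfl⟩
          exact Or.inr ⟨((x, y), i), ⟨hp, trivial⟩, rfl⟩
        · refine (aux_circ _ x r ?_).trans hrε
          rintro _ ⟨i, rfl⟩
          simpa [dist_eq_norm] using hnr i
      have hz' : f z = -y := hz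
      rcases hy with rfl | rfl <;> linarith
    exact_mod_cast lt_of_lt_of_le (mul_pos ht0 hρ) key
end
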